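/- arXiv:1612.06546 — 6 statements merged into one kernel-verified Lean document; each statement's English description precedes it below -/
import Mathlib

section
/- There exists a constant C > 0 such that for all sufficiently large even N, all real p with |p| ≤ 1/100, and all natural numbers k ≤ N, one has ((1+p)/2)^k · ((1-p)/2)^{N-k} · C(N, k) ≤ C · e^{2p²N} · 4^{-N} · C(2N, k + N/2), where C(n, m) denotes the binomial coefficient. -/
/-- The sequence `n * (centralBinom n / 4 ^ n) ^ 2` is monotone. -/
theorem monotone_mul_centralBinom_div_sq :
    Monotone fun n : ℕ => (n : ℝ) * ((n.centralBinom : ℝ) / 4 ^ n) ^ 2 := by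
  refine monotone_nat_of_le_succ fun n => ?_
  have h : ((n : ℝ) + 1) * ((n + 1).centralBinom : ℝ) = 2 * (2 * n + 1) * (n.centralBinom : ℝ) := by
    exact_mod_cast Nat.succ_mul_centralBinom_succ n
  have hn : (0 : ℝ) < (n : ℝ) + 1 := by positivity
  have h' : ((n + 1).centralBinom : ℝ) / 4 ^ (n + 1)
      = (2 * n + 1) / (2 * (n + 1)) * ((n.centralBinom : ℝ) / 4 ^ n) := by
    rw [pow_succ]
    field_simp
    linarith
  rw [h', mul_pow, ← mul_assoc]
  refine mul_le_mul_of_nonneg_right ?_ (sq_nonneg _)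
  push_cast
  rw [div_pow, mul_div_assoc', le_div_iff₀ (by positivity)]
  nlinarith

theorem four_pow_mul_centralBinom_le {n : ℕ} (hn : 0 < n) :
    (4 : ℝ) ^ n * (n.centralBinom : ℝ) ≤ 2 * ((2 * n).centralBinom : ℝ) := by
  have hmono := monotone_mul_centralBinom_div_sq (show n ≤ 2 * n by omega)
  have hn' : (0 : ℝ) < n := by exact_mod_cast hn
  have hle : (n.centralBinom : ℝ) / 4 ^ n ≤ 2 * (((2 * n).centralBinom : ℝ) / 4 ^ (2 * n)) := by
    refine (pow_le_pow_iff_left₀ (by positivity) (by positivity) two_ne_zero).mp ?_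
    simp only at hmono
    push_cast at hmono
    have : ((n.centralBinom : ℝ) / 4 ^ n) ^ 2
        ≤ 2 * (((2 * n).centralBinom : ℝ) / 4 ^ (2 * n)) ^ 2 := by
      refine le_of_mul_le_mul_left ?_ hn'
      linarith
    rw [mul_pow]
    nlinarith [sq_nonneg (((2 * n).centralBinom : ℝ) / 4 ^ (2 * n))]
  have h4 : (0 : ℝ) < 4 ^ n := by positivity
  rw [two_mul n, pow_add, ← two_mul n, mul_div_assoc', div_le_div_iff₀ h4 (by positivity)] at hle
  refine le_of_mul_le_mul_right ?_ h4
  linarith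

theorem cast_choose_succ_mul {m r : ℕ} (h : r ≤ m) :
    (m.choose (r + 1) : ℝ) * (r + 1) = m.choose r * ((m : ℝ) - r) := by
  rw [← Nat.cast_sub h]
  exact_mod_cast Nat.choose_succ_right_eq m r

/-- Away from the centre, `(2n).choose` decays faster than `(4n).choose`, at a Gaussian rate. -/
theorem choose_mul_choose_le_exp {n : ℕ} (hn : 3 ≤ n) {j : ℕ} (hj : j ≤ n) :
    ((2 * n).choose (n + j) : ℝ) * (4 * n).choose (2 * n)
      ≤ Real.exp (-(j ^ 2 / (3 * n))) * ((2 * n).choose n * (4 * n).choose (2 * n + j)) := by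
  induction j with
  | zero => simp
  | succ j ih =>
    have ih := ih (by omega)
    have ha := cast_choose_succ_mul (show n + j ≤ 2 * n by omega)
    have hb := cast_choose_succ_mul (show 2 * n + j ≤ 4 * n by omega)
    push_cast at ha hb
    simp only [← add_assoc]
    have hn' : (3 : ℝ) ≤ n := by exact_mod_cast hn
    have hj' : (j : ℝ) + 1 ≤ n := by exact_mod_cast hj
    have hj0 : (0 : ℝ) ≤ j := by positivity
    have hsplit : Real.exp (-(((j + 1 : ℕ) : ℝ) ^ 2 / (3 * n)))
        = Real.exp (-(j ^ 2 / (3 * n))) * Real.exp (-((2 * j + 1) / (3 * n))) := by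
      rw [← Real.exp_add]
      congr 1
      push_cast
      ring
    have hstep : ((n : ℝ) - j) * (2 * n + j + 1)
        ≤ Real.exp (-((2 * j + 1) / (3 * n))) * ((n + j + 1) * (2 * n - j)) := by
      have hexp := Real.add_one_le_exp (-((2 * (j : ℝ) + 1) / (3 * n)))
      have hden : (0 : ℝ) < (n + j + 1) * (2 * n - j) :=
        mul_pos (by linarith) (by linarith)
      refine le_trans ?_ (mul_le_mul_of_nonneg_right hexp hden.le)
      have hden' : ((n : ℝ) + j + 1) * (2 * n - j) ≤ 3 * n ^ 2 := by
        nlinarith [sq_nonneg ((n : ℝ) - 1 - 2 * j)]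
      have hfrac : (2 * (j : ℝ) + 1) / (3 * n) * ((n + j + 1) * (2 * n - j)) ≤ (2 * j + 1) * n := by
        rw [div_mul_eq_mul_div, div_le_iff₀ (by positivity)]
        nlinarith [mul_le_mul_of_nonneg_left hden' (show (0 : ℝ) ≤ 2 * j + 1 by positivity)]
      nlinarith
    rw [hsplit]
    set A := ((2 * n).choose (n + j) : ℝ)
    set A' := ((2 * n).choose (n + j + 1) : ℝ)
    set B := ((4 * n).choose (2 * n + j) : ℝ)
    set B' := ((4 * n).choose (2 * n + j + 1) : ℝ)
    set a := ((2 * n).choose n : ℝ)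
    set b := ((4 * n).choose (2 * n) : ℝ)
    set E := Real.exp (-(j ^ 2 / (3 * n) : ℝ))
    set F := Real.exp (-((2 * j + 1) / (3 * n) : ℝ))
    have hB' : 0 ≤ B' := by positivity
    have hpos : (0 : ℝ) < (n + j + 1) * (2 * n - j) := mul_pos (by linarith) (by linarith)
    refine le_of_mul_le_mul_right ?_ hpos
    calc A' * b * ((n + j + 1) * (2 * n - j))
        = (A' * (n + j + 1)) * b * (2 * n - j) := by ring
      _ = (A * b) * ((n - j) * (2 * n - j)) := by rw [ha]; ring
      _ ≤ (E * (a * B)) * ((n - j) * (2 * n - j)) :=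
          mul_le_mul_of_nonneg_right ih (mul_nonneg (by linarith) (by linarith))
      _ = E * a * (n - j) * (B * (4 * n - (2 * n + j))) := by ring
      _ = E * a * B' * ((n - j) * (2 * n + j + 1)) := by rw [← hb]; ring
      _ ≤ E * a * B' * (F * ((n + j + 1) * (2 * n - j))) :=
          mul_le_mul_of_nonneg_left hstep (by positivity)
      _ = E * F * (a * B') * ((n + j + 1) * (2 * n - j)) := by ring

theorem one_add_pow_mul_one_sub_pow_le_exp {p : ℝ} (hp : |p| ≤ 1 / 100) {n j : ℕ} (hj : j ≤ n) :
    (1 + p) ^ (n + j) * (1 - p) ^ (n - j) ≤ Real.exp (j * (21 / 10 * |p|)) := by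
  obtain ⟨hp₁, hp₂⟩ := abs_le.mp hp
  have hratio : 1 + p ≤ Real.exp (21 / 10 * |p|) * (1 - p) := by
    refine le_trans ?_ (mul_le_mul_of_nonneg_right (Real.add_one_le_exp _) (by linarith))
    nlinarith [le_abs_self p, abs_nonneg p]
  calc (1 + p) ^ (n + j) * (1 - p) ^ (n - j)
      = (1 + p) ^ n * (1 - p) ^ (n - j) * (1 + p) ^ j := by ring
    _ ≤ (1 + p) ^ n * (1 - p) ^ (n - j) * (Real.exp (21 / 10 * |p|) * (1 - p)) ^ j := by
        refine mul_le_mul_of_nonneg_left (pow_le_pow_left₀ (by linarith) hratio j) ?_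
        exact mul_nonneg (pow_nonneg (by linarith) _) (pow_nonneg (by linarith) _)
    _ = (1 - p ^ 2) ^ n * Real.exp (j * (21 / 10 * |p|)) := by
        rw [mul_pow, ← Real.exp_nat_mul, show 1 - p ^ 2 = (1 + p) * (1 - p) by ring, mul_pow]
        nth_rewrite 4 [← Nat.sub_add_cancel hj]
        rw [pow_add (1 - p)]
        ring
    _ ≤ Real.exp (j * (21 / 10 * |p|)) :=
        mul_le_of_le_one_left (Real.exp_pos _).le
          (pow_le_one₀ (by nlinarith) (by nlinarith [sq_nonneg p]))

/-- The comparison for `N = 2 * n` and `k = n + j` in the upper half. -/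
theorem biased_choose_le_of_upper_half {p : ℝ} (hp : |p| ≤ 1 / 100) {n j : ℕ} (hn : 3 ≤ n)
    (hj : j ≤ n) :
    ((1 + p) / 2) ^ (n + j) * ((1 - p) / 2) ^ (n - j) * ((2 * n).choose (n + j) : ℝ)
      ≤ 2 * Real.exp (4 * p ^ 2 * n) * (1 / 4) ^ (2 * n) * ((4 * n).choose (2 * n + j) : ℝ) := by
  have hn' : (3 : ℝ) ≤ n := by exact_mod_cast hn
  have hcentral := four_pow_mul_centralBinom_le (show 0 < n by omega)
  rw [Nat.centralBinom_eq_two_mul_choose, Nat.centralBinom_eq_two_mul_choose, ← mul_assoc] at hcentral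
  norm_num at hcentral
  have hdecay := choose_mul_choose_le_exp hn hj
  have hbias := one_add_pow_mul_one_sub_pow_le_exp hp hj
  have hb : (0 : ℝ) < (4 * n).choose (2 * n) := by exact_mod_cast Nat.choose_pos (by omega)
  have hexp : Real.exp (j * (21 / 10 * |p|)) * Real.exp (-(j ^ 2 / (3 * n)))
      ≤ Real.exp (4 * p ^ 2 * n) := by
    rw [← Real.exp_add, Real.exp_le_exp, ← sub_eq_add_neg, sub_le_iff_le_add, ← sub_le_iff_le_add',
      le_div_iff₀ (by positivity), ← sq_abs p]
    nlinarith [sq_nonneg ((j : ℝ) - 63 / 20 * |p| * n), sq_nonneg (|p| * n)]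
  have hhalf : ((1 + p) / 2) ^ (n + j) * ((1 - p) / 2) ^ (n - j)
      = (1 / 4) ^ n * ((1 + p) ^ (n + j) * (1 - p) ^ (n - j)) := by
    have h2 : (2 : ℝ) ^ (n + j) * 2 ^ (n - j) = 4 ^ n := by
      rw [← pow_add, show n + j + (n - j) = 2 * n by omega, pow_mul]
      norm_num
    rw [div_pow, div_pow, div_mul_div_comm, h2, one_div_pow]
    ring
  rw [hhalf, two_mul n, pow_add (1 / 4 : ℝ), ← two_mul n]
  set A := ((2 * n).choose (n + j) : ℝ)
  set B := ((4 * n).choose (2 * n + j) : ℝ)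
  set a := ((2 * n).choose n : ℝ)
  set b := ((4 * n).choose (2 * n) : ℝ)
  set P := (1 + p) ^ (n + j) * (1 - p) ^ (n - j)
  have hab : a ≤ (1 / 4) ^ n * (2 * b) := by
    rw [one_div_pow, one_div_mul_eq_div, le_div_iff₀ (by positivity)]
    linarith
  have hAB : P * A * b ≤ Real.exp (4 * p ^ 2 * n) * ((1 / 4) ^ n * (2 * b) * B) :=
    calc P * A * b = P * (A * b) := by ring
      _ ≤ Real.exp (j * (21 / 10 * |p|)) * (Real.exp (-(j ^ 2 / (3 * n))) * (a * B)) := by gcongr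
      _ = Real.exp (j * (21 / 10 * |p|)) * Real.exp (-(j ^ 2 / (3 * n))) * (a * B) := by ring
      _ ≤ Real.exp (4 * p ^ 2 * n) * ((1 / 4) ^ n * (2 * b) * B) := by gcongr
  have hPA : P * A ≤ Real.exp (4 * p ^ 2 * n) * ((1 / 4) ^ n * 2 * B) := by
    refine le_of_mul_le_mul_right (hAB.trans_eq ?_) hb
    ring
  calc (1 / 4) ^ n * P * A = (1 / 4) ^ n * (P * A) := by ring
    _ ≤ (1 / 4) ^ n * (Real.exp (4 * p ^ 2 * n) * ((1 / 4) ^ n * 2 * B)) := by gcongr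
    _ = _ := by ring

theorem stmt5 :
    ∃ C > (0 : ℝ), ∃ N₀ : ℕ, ∀ N ≥ N₀, Even N →
      ∀ p : ℝ, |p| ≤ 1 / 100 → ∀ k : ℕ, k ≤ N →
        ((1 + p) / 2) ^ k * ((1 - p) / 2) ^ (N - k) * (N.choose k : ℝ)
          ≤ C * Real.exp (2 * p ^ 2 * N) * (1 / 4) ^ N
              * ((2 * N).choose (k + N / 2) : ℝ) := by
  refine ⟨2, two_pos, 6, fun N hN hEven p hp k hk => ?_⟩
  obtain ⟨n, rfl⟩ := hEven.two_dvd
  have hexp : 2 * p ^ 2 * ((2 * n : ℕ) : ℝ) = 4 * p ^ 2 * n := by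
    push_cast
    ring
  rw [hexp, Nat.mul_div_cancel_left n two_pos, show 2 * (2 * n) = 4 * n by ring]
  rcases le_total n k with h | h
  · obtain ⟨j, rfl⟩ := Nat.exists_eq_add_of_le h
    have key := biased_choose_le_of_upper_half hp (show 3 ≤ n by omega) (show j ≤ n by omega)
    rwa [show 2 * n - (n + j) = n - j by omega, show n + j + n = 2 * n + j by omega]
  · obtain ⟨j, rfl⟩ := Nat.exists_eq_add_of_le h
    have key := biased_choose_le_of_upper_half (p := -p) (by rwa [abs_neg])
      (show 3 ≤ k + j by omega) (show j ≤ k + j by omega)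
    rw [neg_sq, sub_neg_eq_add, ← sub_eq_add_neg, Nat.add_sub_cancel,
      Nat.choose_symm_of_eq_add (show 2 * (k + j) = (k + j + j) + k by ring),
      Nat.choose_symm_of_eq_add
        (show 4 * (k + j) = (2 * (k + j) + j) + (k + (k + j)) by ring)] at key
    rw [show 2 * (k + j) - k = k + j + j by omega]
    rwa [mul_comm (((1 + p) / 2) ^ k)]
end

section
/- For every x ∈ [0,1] and every p ∈ ℝ, one has ln 2 + p·(2x - 1) + h(x) - 2·h(x/2 + 1/4) ≤ p², where h is the binary entropy function measured in nats. -/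
/-- The binary entropy function measured in nats (recall `Real.log 0 = 0` in Mathlib,
which implements the convention `0 · ln 0 = 0`). -/
noncomputable def binEnt (t : ℝ) : ℝ := -t * Real.log t - (1 - t) * Real.log (1 - t)

theorem binEnt_eq_binEntropy : binEnt = Real.binEntropy := by
  funext t
  simp only [binEnt, Real.binEntropy, Real.log_inv]
  ring

theorem binEnt_one_sub (t : ℝ) : binEnt (1 - t) = binEnt t := by
  rw [binEnt_eq_binEntropy, Real.binEntropy_one_sub]

/-- The gap between `binEnt x` and `2 * binEnt (x / 2 + 1 / 4)`, corrected by a quadratic term that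
cancels its second derivative at `1 / 2`. -/
noncomputable def entropyGap (x : ℝ) : ℝ :=
  (2 * x - 1) ^ 2 / 4 + binEnt x - 2 * binEnt (x / 2 + 1 / 4)

theorem entropyGap_one_sub (x : ℝ) : entropyGap (1 - x) = entropyGap x := by
  have h : (1 - x) / 2 + 1 / 4 = 1 - (x / 2 + 1 / 4) := by ring
  simp only [entropyGap, h, binEnt_one_sub]
  ring

theorem entropyGap_half : entropyGap (1 / 2) = -Real.log 2 := by
  have h : (1 / 2 : ℝ) / 2 + 1 / 4 = 2⁻¹ := by norm_num
  rw [entropyGap, h, one_div, binEnt_eq_binEntropy, Real.binEntropy_two_inv]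
  ring

theorem hasDerivAt_entropyGap {x : ℝ} (h0 : 0 < x) (h1 : x < 1) :
    HasDerivAt entropyGap
      ((2 * x - 1) + (Real.log (1 - x) - Real.log x)
        - (Real.log (3 / 4 - x / 2) - Real.log (x / 2 + 1 / 4))) x := by
  have hx := Real.hasDerivAt_binEntropy h0.ne' h1.ne
  have hy := Real.hasDerivAt_binEntropy (p := x / 2 + 1 / 4) (by linarith) (by linarith)
  have hl : HasDerivAt (fun x : ℝ => x / 2 + 1 / 4) (1 / 2) x :=
    ((hasDerivAt_id x).div_const 2).add_const (1 / 4)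
  have hq : HasDerivAt (fun x : ℝ => (2 * x - 1) ^ 2 / 4) (2 * x - 1) x := by
    refine (((((hasDerivAt_id x).const_mul 2).sub_const 1).pow 2).div_const 4).congr_deriv ?_
    simp only [id]
    ring
  have h := (hq.add hx).sub ((hy.comp x hl).const_mul 2)
  have he : (1 : ℝ) - (x / 2 + 1 / 4) = 3 / 4 - x / 2 := by ring
  rw [he] at h
  unfold entropyGap
  rw [binEnt_eq_binEntropy]
  refine h.congr_deriv ?_
  ring

theorem hasDerivAt_deriv_entropyGap {x : ℝ} (h0 : 0 < x) (h1 : x < 1) :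
    HasDerivAt
      (fun x : ℝ => (2 * x - 1) + (Real.log (1 - x) - Real.log x)
        - (Real.log (3 / 4 - x / 2) - Real.log (x / 2 + 1 / 4)))
      (2 - 1 / (1 - x) - 1 / x + 2 / (3 - 2 * x) + 2 / (1 + 2 * x)) x := by
  have hlin : HasDerivAt (fun x : ℝ => 2 * x - 1) (2 * 1) x :=
    ((hasDerivAt_id x).const_mul 2).sub_const 1
  have ha := ((hasDerivAt_id x).const_sub 1).log (by simp only [id]; linarith)
  have hb := (hasDerivAt_id x).log h0.ne'
  have hc := (((hasDerivAt_id x).div_const 2).const_sub (3 / 4)).log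
    (by simp only [id]; linarith)
  have hd := (((hasDerivAt_id x).div_const 2).add_const (1 / 4)).log
    (by simp only [id]; linarith)
  refine ((hlin.add (ha.sub hb)).sub (hc.sub hd)).congr_deriv ?_
  simp only [id]
  have e1 : 1 - x ≠ 0 := by linarith
  have e2 : 3 - 2 * x ≠ 0 := by linarith
  have e3 : 1 + 2 * x ≠ 0 := by linarith
  have e4 : 3 / 4 - x / 2 = (3 - 2 * x) / 4 := by ring
  have e5 : x / 2 + 1 / 4 = (1 + 2 * x) / 4 := by ring
  rw [e4, e5]
  field_simp
  ring

theorem deriv2_entropyGap_nonpos {x : ℝ} (h0 : 0 < x) (h1 : x < 1) :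
    2 - 1 / (1 - x) - 1 / x + 2 / (3 - 2 * x) + 2 / (1 + 2 * x) ≤ 0 := by
  have e1 : 0 < 1 - x := by linarith
  have e2 : 0 < 3 - 2 * x := by linarith
  have e3 : 0 < 1 + 2 * x := by linarith
  have key : 2 - 1 / (1 - x) - 1 / x + 2 / (3 - 2 * x) + 2 / (1 + 2 * x)
      = -((2 * x - 1) ^ 2 * (2 * (x * (1 - x)) + 3))
        / ((1 - x) * x * (3 - 2 * x) * (1 + 2 * x)) := by
    field_simp
    ring
  rw [key]
  exact div_nonpos_of_nonpos_of_nonneg (neg_nonpos.mpr (by positivity)) (by positivity)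

theorem concaveOn_entropyGap : ConcaveOn ℝ (Set.Icc 0 1) entropyGap := by
  refine concaveOn_of_hasDerivWithinAt2_nonpos (convex_Icc 0 1) ?_
    (f' := fun x : ℝ => (2 * x - 1) + (Real.log (1 - x) - Real.log x)
      - (Real.log (3 / 4 - x / 2) - Real.log (x / 2 + 1 / 4)))
    (f'' := fun x : ℝ => 2 - 1 / (1 - x) - 1 / x + 2 / (3 - 2 * x) + 2 / (1 + 2 * x))
    ?_ ?_ ?_
  · unfold entropyGap
    rw [binEnt_eq_binEntropy]
    fun_prop
  all_goals
    intro x hx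
    rw [interior_Icc] at hx
  · exact (hasDerivAt_entropyGap hx.1 hx.2).hasDerivWithinAt
  · exact (hasDerivAt_deriv_entropyGap hx.1 hx.2).hasDerivWithinAt
  · exact deriv2_entropyGap_nonpos hx.1 hx.2

theorem entropyGap_le {x : ℝ} (h0 : 0 ≤ x) (h1 : x ≤ 1) : entropyGap x ≤ -Real.log 2 := by
  have h := concaveOn_entropyGap.2 (show x ∈ Set.Icc 0 1 from ⟨h0, h1⟩)
    (show 1 - x ∈ Set.Icc 0 1 from ⟨by linarith, by linarith⟩)
    (show (0 : ℝ) ≤ 1 / 2 by norm_num) (show (0 : ℝ) ≤ 1 / 2 by norm_num) (by norm_num)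
  have hm : (1 / 2 : ℝ) * x + 1 / 2 * (1 - x) = 1 / 2 := by ring
  simp only [smul_eq_mul] at h
  rw [hm, entropyGap_one_sub, entropyGap_half] at h
  linarith

theorem stmt6 :
    ∀ x : ℝ, 0 ≤ x → x ≤ 1 → ∀ p : ℝ,
      Real.log 2 + p * (2 * x - 1) + binEnt x - 2 * binEnt (x / 2 + 1 / 4) ≤ p ^ 2 := by
  intro x h0 h1 p
  have h := entropyGap_le h0 h1
  unfold entropyGap at h
  nlinarith [sq_nonneg (p - (2 * x - 1) / 2)]
end

section
/- For every x ∈ [0, 1/2], one has ln 2 + h(x + 1/2) - 2·h(x/2 + 1/2) ≤ -x², where h is the binary entropy function measured in nats. -/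
open Real Set

theorem binEnt_eq_binEntropy_s7 (t : ℝ) : binEnt t = binEntropy t := by
  simp only [binEnt, binEntropy, log_inv]
  ring

/-- The derivative of `x ↦ h (x + 1/2) - 2 * h (x/2 + 1/2) + x ^ 2`. -/
theorem hasDerivAt_binEntropy_gap {x : ℝ} (h0 : 0 ≤ x) (h1 : x < 1 / 2) :
    HasDerivAt (fun y : ℝ => binEntropy (y + 1 / 2) - 2 * binEntropy (y / 2 + 1 / 2) + y ^ 2)
      (log (1 / 2 - x) - log (1 / 2 + x) - log (1 / 2 - x / 2) + log (1 / 2 + x / 2) + 2 * x)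
      x := by
  have hA := (hasDerivAt_binEntropy (p := x + 1 / 2) (by linarith) (by linarith)).comp x
    ((hasDerivAt_id x).add_const (1 / 2))
  have hB := (hasDerivAt_binEntropy (p := x / 2 + 1 / 2) (by linarith) (by linarith)).comp x
    (((hasDerivAt_id x).div_const 2).add_const (1 / 2))
  refine ((hA.sub (hB.const_mul 2)).add (hasDerivAt_pow 2 x)).congr_deriv ?_
  rw [show 1 - (x + 1 / 2) = 1 / 2 - x by ring, show 1 - (x / 2 + 1 / 2) = 1 / 2 - x / 2 by ring,
    add_comm x, add_comm (x / 2)]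
  norm_num
  ring

theorem log_gap_nonpos {x : ℝ} (h0 : 0 ≤ x) (h1 : x < 1 / 2) :
    log (1 / 2 - x) - log (1 / 2 + x) - log (1 / 2 - x / 2) + log (1 / 2 + x / 2) + 2 * x
      ≤ 0 := by
  have hd : ∀ y ∈ Ico (0 : ℝ) (1 / 2), HasDerivAt (fun y : ℝ =>
      log (1 / 2 - y) - log (1 / 2 + y) - log (1 / 2 - y / 2) + log (1 / 2 + y / 2) + 2 * y)
      (-1 / (1 / 2 - y) - 1 / (1 / 2 + y) - -(1 / 2) / (1 / 2 - y / 2)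
        + 1 / 2 / (1 / 2 + y / 2) + 2 * 1) y := by
    rintro y ⟨hy0, hy1⟩
    have hy := hasDerivAt_id y
    exact ((((hy.const_sub (1 / 2)).log (by simp only [id]; linarith)).sub
      ((hy.const_add (1 / 2)).log (by simp only [id]; linarith))).sub
      ((((hy.div_const 2).const_sub (1 / 2)).log (by simp only [id]; linarith))) |>.add
      ((((hy.div_const 2).const_add (1 / 2)).log (by simp only [id]; linarith)))).add
      (hy.const_mul 2)
  have hanti := antitoneOn_of_deriv_nonpos (convex_Ico (0 : ℝ) (1 / 2))
    (fun y hy => (hd y hy).continuousAt.continuousWithinAt)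
    (fun y hy => (hd y (interior_subset hy)).differentiableAt.differentiableWithinAt)
    (fun y hy => by
      obtain ⟨hy0, hy1⟩ := interior_subset hy
      rw [(hd y ⟨hy0, hy1⟩).deriv]
      have e1 : 0 < 1 - 2 * y := by linarith
      have e2 : 0 < 1 + 2 * y := by linarith
      have e3 : 0 < 1 - y := by linarith
      have e4 : 0 < 1 + y := by linarith
      have key : -1 / (1 / 2 - y) - 1 / (1 / 2 + y) - -(1 / 2) / (1 / 2 - y / 2)
          + 1 / 2 / (1 / 2 + y / 2) + 2 * 1
          = -(y ^ 2 * (14 - 8 * y ^ 2)) / ((1 - 2 * y) * (1 + 2 * y) * ((1 - y) * (1 + y))) := by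
        rw [show 1 / 2 - y = (1 - 2 * y) / 2 by ring, show 1 / 2 + y = (1 + 2 * y) / 2 by ring,
          show 1 / 2 - y / 2 = (1 - y) / 2 by ring, show 1 / 2 + y / 2 = (1 + y) / 2 by ring]
        field_simp
        ring
      rw [key]
      have hnum : 0 ≤ 14 - 8 * y ^ 2 := by nlinarith
      exact div_nonpos_of_nonpos_of_nonneg (neg_nonpos.mpr (by positivity)) (by positivity))
  simpa using hanti ⟨le_rfl, by norm_num⟩ ⟨h0, h1⟩ h0

theorem stmt7 :
    ∀ x : ℝ, 0 ≤ x → x ≤ 1 / 2 →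
      Real.log 2 + binEnt (x + 1 / 2) - 2 * binEnt (x / 2 + 1 / 2) ≤ -x ^ 2 := by
  intro x h0 h1
  have hanti := antitoneOn_of_deriv_nonpos (convex_Icc (0 : ℝ) (1 / 2))
    (f := fun y : ℝ => binEntropy (y + 1 / 2) - 2 * binEntropy (y / 2 + 1 / 2) + y ^ 2)
    (Continuous.continuousOn (by fun_prop))
    (fun y hy => by
      rw [interior_Icc] at hy
      exact (hasDerivAt_binEntropy_gap hy.1.le hy.2).differentiableAt.differentiableWithinAt)
    (fun y hy => by
      rw [interior_Icc] at hy
      rw [(hasDerivAt_binEntropy_gap hy.1.le hy.2).deriv]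
      exact log_gap_nonpos hy.1.le hy.2)
  have h := hanti ⟨le_rfl, by norm_num⟩ ⟨h0, h1⟩ h0
  have hhalf : binEntropy (1 / 2) = log 2 := by rw [one_div, binEntropy_two_inv]
  simp only [zero_div, zero_add, hhalf] at h
  rw [binEnt_eq_binEntropy_s7, binEnt_eq_binEntropy_s7]
  linarith
end

section
/- For all ε > 0 and α₀ > 0 there exists δ > 0 such that for every Borel probability measure P on ℝ whose Kullback–Leibler divergence from the standard Gaussian measure γ on ℝ satisfies D(P ‖ γ) < δ, every z ∈ ℝ, and every α with 0 < α ≤ α₀, one has ∫ cosh(α·x + z) dP(x) ≥ e^{α²/2} - ε (where the integral is allowed to be infinite). -/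
open MeasureTheory ProbabilityTheory
open scoped ENNReal

open Classical in
/-- The Kullback–Leibler divergence `D(P ‖ Q) = ∫ ln(dP/dQ) dP`, equal to `+∞` when `P` is not
absolutely continuous with respect to `Q` (or the log-likelihood ratio is not integrable). -/
noncomputable def klDiv (P Q : Measure ℝ) : ℝ≥0∞ :=
  if P ≪ Q ∧ Integrable (fun x => Real.log (P.rnDeriv Q x).toReal) P then
    ENNReal.ofReal (∫ x, Real.log (P.rnDeriv Q x).toReal ∂P)
  else ⊤

/-- Young's inequality for the dual pair `klFun`, `exp`, with the exponential bounded by its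
second-order expansion. -/
lemma sub_sq_div_two_le_klFun_add_mul {r v : ℝ} (hr : 0 ≤ r) (hv : 0 ≤ v) :
    v - v ^ 2 / 2 ≤ InformationTheory.klFun r + r * v := by
  have hexp : Real.exp (-v) ≤ 1 - v + v ^ 2 / 2 := by
    have h := Real.quadratic_le_exp_of_nonneg hv
    rw [Real.exp_neg, inv_le_iff_one_le_mul₀ (Real.exp_pos v)]
    have hpos : 0 ≤ 1 - v + v ^ 2 / 2 := by nlinarith [sq_nonneg (v - 1)]
    nlinarith [mul_le_mul_of_nonneg_left h hpos, sq_nonneg (v ^ 2)]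
  have hyoung : 1 - Real.exp (-v) ≤ InformationTheory.klFun r + r * v := by
    rw [InformationTheory.klFun_apply]
    rcases hr.eq_or_lt with rfl | hr
    · simp [(Real.exp_pos (-v)).le]
    · have h := Real.add_one_le_exp (-(Real.log r) - v)
      have he : r * Real.exp (-(Real.log r) - v) = Real.exp (-v) := by
        rw [sub_eq_add_neg, Real.exp_add, Real.exp_neg, Real.exp_log hr]
        field_simp
      nlinarith [mul_le_mul_of_nonneg_left h hr.le]
  linarith

/-- A second-order lower bound for the change of expectation of a nonnegative function in terms of
the relative entropy. -/
lemma mul_integral_sub_le_integral_llr_add {Ω : Type*} [MeasurableSpace Ω] {P Q : Measure Ω}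
    [IsProbabilityMeasure P] [IsProbabilityMeasure Q] (hPQ : P ≪ Q)
    (hllr : Integrable (llr P Q) P) {g : Ω → ℝ} (hg : 0 ≤ g) (hgP : Integrable g P)
    (hgQ : Integrable g Q) (hgQ2 : Integrable (fun x => g x ^ 2) Q) {t : ℝ} (ht : 0 ≤ t) :
    t * ∫ x, g x ∂Q - t ^ 2 / 2 * ∫ x, g x ^ 2 ∂Q ≤ ∫ x, llr P Q x ∂P + t * ∫ x, g x ∂P := by
  have hkl : Integrable (fun x => InformationTheory.klFun (P.rnDeriv Q x).toReal) Q :=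
    (InformationTheory.integrable_klFun_rnDeriv_iff hPQ).2 hllr
  have hkl_eq := InformationTheory.integral_klFun_rnDeriv hPQ hllr
  have hrg : Integrable (fun x => (P.rnDeriv Q x).toReal * g x) Q :=
    (integrable_rnDeriv_smul_iff hPQ).2 hgP
  have hrg_eq : ∫ x, (P.rnDeriv Q x).toReal * g x ∂Q = ∫ x, g x ∂P :=
    integral_rnDeriv_smul hPQ
  have hmono : ∫ x, (t * g x - t ^ 2 / 2 * g x ^ 2) ∂Q ≤
      ∫ x, (InformationTheory.klFun (P.rnDeriv Q x).toReal
        + t * ((P.rnDeriv Q x).toReal * g x)) ∂Q := by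
    refine integral_mono ((hgQ.const_mul t).sub (hgQ2.const_mul _)) (hkl.add (hrg.const_mul t))
      fun x => ?_
    have h := sub_sq_div_two_le_klFun_add_mul (r := (P.rnDeriv Q x).toReal)
      ENNReal.toReal_nonneg (mul_nonneg ht (hg x))
    dsimp only
    nlinarith
  rw [integral_sub (hgQ.const_mul t) (hgQ2.const_mul _), integral_add hkl (hrg.const_mul t),
    integral_const_mul, integral_const_mul, integral_const_mul, hkl_eq, hrg_eq] at hmono
  simpa using hmono

lemma integral_exp_mul_gaussianReal (a : ℝ) :
    ∫ x, Real.exp (a * x) ∂(gaussianReal 0 1) = Real.exp (a ^ 2 / 2) := by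
  simpa [mgf] using congrFun (mgf_id_gaussianReal (μ := 0) (v := 1)) a

lemma integrable_expMixture_gaussianReal (a p q : ℝ) :
    Integrable (fun x => p * Real.exp (a * x) + q * Real.exp (-a * x)) (gaussianReal 0 1) :=
  ((integrable_exp_mul_gaussianReal a).const_mul p).add
    ((integrable_exp_mul_gaussianReal (-a)).const_mul q)

lemma integral_expMixture_gaussianReal (a : ℝ) {p q : ℝ} (hpq : p + q = 1) :
    ∫ x, (p * Real.exp (a * x) + q * Real.exp (-a * x)) ∂(gaussianReal 0 1)
      = Real.exp (a ^ 2 / 2) := by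
  rw [integral_add ((integrable_exp_mul_gaussianReal a).const_mul p)
    ((integrable_exp_mul_gaussianReal (-a)).const_mul q), integral_const_mul, integral_const_mul,
    integral_exp_mul_gaussianReal, integral_exp_mul_gaussianReal, neg_sq, ← add_mul, hpq, one_mul]

lemma expMixture_sq_le (a x : ℝ) {p q : ℝ} (hp : 0 ≤ p) (hq : 0 ≤ q) (hpq : p + q = 1) :
    (p * Real.exp (a * x) + q * Real.exp (-a * x)) ^ 2
      ≤ p * Real.exp (2 * a * x) + q * Real.exp (-(2 * a) * x) := by
  have h1 : Real.exp (2 * a * x) = Real.exp (a * x) ^ 2 := by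
    rw [← Real.exp_nat_mul]; push_cast; ring_nf
  have h2 : Real.exp (-(2 * a) * x) = Real.exp (-a * x) ^ 2 := by
    rw [← Real.exp_nat_mul]; push_cast; ring_nf
  rw [h1, h2]
  obtain rfl : q = 1 - p := by linarith
  nlinarith [mul_nonneg (mul_nonneg hp hq) (sq_nonneg (Real.exp (a * x) - Real.exp (-a * x)))]

/-- Dividing `cosh (a * x + z)` by `cosh z` gives a convex combination of exponentials. -/
lemma exists_cosh_eq_cosh_mul_expMixture (z : ℝ) :
    ∃ p q : ℝ, 0 ≤ p ∧ 0 ≤ q ∧ p + q = 1 ∧ ∀ a x : ℝ,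
      Real.cosh (a * x + z) = Real.cosh z * (p * Real.exp (a * x) + q * Real.exp (-a * x)) := by
  have hz := Real.cosh_pos z
  refine ⟨Real.exp z / (2 * Real.cosh z), Real.exp (-z) / (2 * Real.cosh z), by positivity,
    by positivity, ?_, fun a x => ?_⟩
  · rw [← add_div, div_eq_one_iff_eq (by positivity), Real.cosh_eq]
    ring
  · rw [Real.cosh_eq (a * x + z), neg_add, Real.exp_add, Real.exp_add, neg_mul]
    field_simp

/-- Quantitative lower bound on exponential mixtures under a measure close to the Gaussian. -/
lemma exp_sub_le_integral_expMixture {P : Measure ℝ} [IsProbabilityMeasure P]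
    (hP : P ≪ gaussianReal 0 1) (hllr : Integrable (llr P (gaussianReal 0 1)) P)
    {a p q t : ℝ} (hp : 0 ≤ p) (hq : 0 ≤ q) (hpq : p + q = 1) (ht : 0 ≤ t)
    (hint : Integrable (fun x => p * Real.exp (a * x) + q * Real.exp (-a * x)) P) :
    t * Real.exp (a ^ 2 / 2) - t ^ 2 / 2 * Real.exp (2 * a ^ 2)
      ≤ ∫ x, llr P (gaussianReal 0 1) x ∂P
        + t * ∫ x, (p * Real.exp (a * x) + q * Real.exp (-a * x)) ∂P := by
  have hsq_int : Integrable (fun x => (p * Real.exp (a * x) + q * Real.exp (-a * x)) ^ 2)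
      (gaussianReal 0 1) := by
    refine (integrable_expMixture_gaussianReal (2 * a) p q).mono' (by fun_prop)
      (.of_forall fun x => ?_)
    rw [Real.norm_of_nonneg (sq_nonneg _)]
    exact expMixture_sq_le a x hp hq hpq
  have hsq : ∫ x, (p * Real.exp (a * x) + q * Real.exp (-a * x)) ^ 2 ∂(gaussianReal 0 1)
      ≤ Real.exp (2 * a ^ 2) := by
    calc _ ≤ ∫ x, (p * Real.exp (2 * a * x) + q * Real.exp (-(2 * a) * x)) ∂(gaussianReal 0 1) :=
          integral_mono hsq_int (integrable_expMixture_gaussianReal (2 * a) p q)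
            fun x => expMixture_sq_le a x hp hq hpq
      _ = Real.exp (2 * a ^ 2) := by
          rw [integral_expMixture_gaussianReal _ hpq]; ring_nf
  have h := mul_integral_sub_le_integral_llr_add hP hllr (fun x => by positivity) hint
    (integrable_expMixture_gaussianReal a p q) hsq_int ht
  rw [integral_expMixture_gaussianReal a hpq] at h
  linarith [mul_le_mul_of_nonneg_left hsq (by positivity : 0 ≤ t ^ 2 / 2)]

theorem stmt9 :
    ∀ ε > (0 : ℝ), ∀ α₀ > (0 : ℝ), ∃ δ > (0 : ℝ),
      ∀ P : Measure ℝ, IsProbabilityMeasure P →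
        klDiv P (gaussianReal 0 1) < ENNReal.ofReal δ →
        ∀ z : ℝ, ∀ α : ℝ, 0 < α → α ≤ α₀ →
          ENNReal.ofReal (Real.exp (α ^ 2 / 2) - ε)
            ≤ ∫⁻ x, ENNReal.ofReal (Real.cosh (α * x + z)) ∂P := by
  intro ε hε α₀ hα₀
  set K := Real.exp (2 * α₀ ^ 2) with hK
  have hKpos : 0 < K := Real.exp_pos _
  refine ⟨ε ^ 2 / (2 * K), by positivity, fun P hP hkl z α hα hαα₀ => ?_⟩
  obtain ⟨hac, hllr⟩ : P ≪ gaussianReal 0 1 ∧ Integrable (llr P (gaussianReal 0 1)) P := by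
    by_contra h
    exact not_top_lt (hkl.trans_eq' (if_neg h))
  have hD : ∫ x, llr P (gaussianReal 0 1) x ∂P < ε ^ 2 / (2 * K) := by
    rw [klDiv, if_pos ⟨hac, hllr⟩] at hkl
    exact (ENNReal.ofReal_lt_ofReal_iff (by positivity)).1 hkl
  by_cases hcosh : Integrable (fun x => Real.cosh (α * x + z)) P
  swap
  · have htop : ∫⁻ x, ENNReal.ofReal (Real.cosh (α * x + z)) ∂P = ⊤ := by
      by_contra h
      exact hcosh ((lintegral_ofReal_ne_top_iff_integrable (by fun_prop)
        (.of_forall fun x => (Real.cosh_pos _).le)).1 h)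
    simp [htop]
  rw [← ofReal_integral_eq_lintegral_ofReal hcosh (.of_forall fun x => (Real.cosh_pos _).le)]
  refine ENNReal.ofReal_le_ofReal ?_
  obtain ⟨p, q, hp, hq, hpq, hmix⟩ := exists_cosh_eq_cosh_mul_expMixture z
  have hint : Integrable (fun x => p * Real.exp (α * x) + q * Real.exp (-α * x)) P := by
    simp_rw [hmix] at hcosh
    exact (integrable_const_mul_iff (Real.cosh_pos z).ne'.isUnit _).1 hcosh
  have hbound := exp_sub_le_integral_expMixture hac hllr hp hq hpq
    (by positivity : 0 ≤ ε / K) hint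
  have hexp : Real.exp (2 * α ^ 2) ≤ K := by rw [hK]; gcongr
  simp_rw [hmix, integral_const_mul]
  set I := ∫ x, (p * Real.exp (α * x) + q * Real.exp (-α * x)) ∂P
  have hI : Real.exp (α ^ 2 / 2) - ε ≤ I := by
    have h1 : (ε / K) ^ 2 / 2 * Real.exp (2 * α ^ 2) ≤ (ε / K) ^ 2 / 2 * K := by gcongr
    have h2 : (ε / K) ^ 2 / 2 * K + ε ^ 2 / (2 * K) = ε / K * ε := by field_simp; ring
    refine le_of_mul_le_mul_left ?_ (by positivity : 0 < ε / K)
    linarith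
  have hI0 : 0 ≤ I := integral_nonneg fun x => by positivity
  exact hI.trans (le_mul_of_one_le_left hI0 (Real.one_le_cosh z))
end

section
/- There exist constants ε > 0 and D' ∈ (0,1) such that for all sufficiently large N, every k with N - k ≥ D'·N, and every function q : {-1,1}^k → ℝ, one has E_x[ | q(x_1, …, x_k) - ( (Σ_{i=1}^N x_i) / N )² | ] > ε / N, where the expectation is over x drawn uniformly at random from {-1,1}^N. -/
/-- The sign value `±1` of a Boolean. -/
def sg (b : Bool) : ℝ := if b then 1 else -1

open Finset

/-- Negating the coordinates in `S`, as a permutation of the Boolean cube. -/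
def flipOn {ι : Type*} [DecidableEq ι] (S : Finset ι) : Equiv.Perm (ι → Bool) :=
  Function.Involutive.toPerm (fun x i => if i ∈ S then !x i else x i) (by
    intro x
    funext i
    by_cases h : i ∈ S <;> simp [h])

section Flip

variable {ι : Type*} [DecidableEq ι]

lemma flipOn_apply (S : Finset ι) (x : ι → Bool) (i : ι) :
    flipOn S x i = if i ∈ S then !x i else x i := rfl

lemma sg_not (b : Bool) : sg (!b) = -sg b := by cases b <;> simp [sg]

lemma sg_sq (b : Bool) : sg b ^ 2 = 1 := by cases b <;> simp [sg]

lemma sum_sg_flipOn_self (S : Finset ι) (x : ι → Bool) :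
    ∑ i ∈ S, sg (flipOn S x i) = -∑ i ∈ S, sg (x i) := by
  rw [← sum_neg_distrib]
  refine sum_congr rfl fun i hi => ?_
  rw [flipOn_apply, if_pos hi, sg_not]

lemma sum_sg_flipOn_of_disjoint {S T : Finset ι} (h : Disjoint T S) (x : ι → Bool) :
    ∑ i ∈ T, sg (flipOn S x i) = ∑ i ∈ T, sg (x i) := by
  refine sum_congr rfl fun i hi => ?_
  rw [flipOn_apply, if_neg (disjoint_left.mp h hi)]

variable [Fintype ι]

lemma sum_mul_sg_eq_zero (i : ι) (F : (ι → Bool) → ℝ) (hF : ∀ x, F (flipOn {i} x) = F x) :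
    ∑ x, F x * sg (x i) = 0 := by
  have h := Equiv.sum_comp (flipOn {i}) (fun x => F x * sg (x i))
  simp only [hF, flipOn_apply, mem_singleton, if_true, sg_not, mul_neg, sum_neg_distrib] at h
  linarith

/-- Second moment of a Rademacher sum, weighted by a function of the other coordinates. -/
lemma sum_mul_sum_sg_sq (S : Finset ι) (W : (ι → Bool) → ℝ)
    (hW : ∀ i ∈ S, ∀ x, W (flipOn {i} x) = W x) :
    ∑ x, W x * (∑ i ∈ S, sg (x i)) ^ 2 = #S * ∑ x, W x := by
  induction S using Finset.induction_on with
  | empty => simp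
  | insert a T ha ih =>
    have ih := ih fun i hi => hW i (mem_insert_of_mem hi)
    have hdis : Disjoint T {a} := by simpa using ha
    have hodd := sum_mul_sg_eq_zero a (fun x => 2 * W x * ∑ i ∈ T, sg (x i)) fun x => by
      rw [hW a (mem_insert_self a T), sum_sg_flipOn_of_disjoint hdis]
    have hexp : ∀ x : ι → Bool, W x * (∑ i ∈ insert a T, sg (x i)) ^ 2 =
        W x * (∑ i ∈ T, sg (x i)) ^ 2 + W x + 2 * W x * (∑ i ∈ T, sg (x i)) * sg (x a) := by
      intro x
      rw [sum_insert ha]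
      linear_combination W x * sg_sq (x a)
    simp only [hexp, sum_add_distrib, hodd, ih, card_insert_of_notMem ha]
    push_cast
    ring

/-- Fourth moment of a Rademacher sum, weighted by a function of the other coordinates. -/
lemma sum_mul_sum_sg_pow_four (S : Finset ι) (W : (ι → Bool) → ℝ)
    (hW : ∀ i ∈ S, ∀ x, W (flipOn {i} x) = W x) :
    ∑ x, W x * (∑ i ∈ S, sg (x i)) ^ 4 = (3 * (#S : ℝ) ^ 2 - 2 * #S) * ∑ x, W x := by
  induction S using Finset.induction_on with
  | empty => simp
  | insert a T ha ih =>
    have hT : ∀ i ∈ T, ∀ x, W (flipOn {i} x) = W x := fun i hi => hW i (mem_insert_of_mem hi)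
    have ih := ih hT
    have h2 := sum_mul_sum_sg_sq T W hT
    have hdis : Disjoint T {a} := by simpa using ha
    have hodd := sum_mul_sg_eq_zero a
        (fun x => W x * (4 * (∑ i ∈ T, sg (x i)) ^ 3 + 4 * ∑ i ∈ T, sg (x i))) fun x => by
      rw [hW a (mem_insert_self a T), sum_sg_flipOn_of_disjoint hdis]
    have hexp : ∀ x : ι → Bool, W x * (∑ i ∈ insert a T, sg (x i)) ^ 4 =
        W x * (∑ i ∈ T, sg (x i)) ^ 4 + 6 * (W x * (∑ i ∈ T, sg (x i)) ^ 2) + W x +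
          W x * (4 * (∑ i ∈ T, sg (x i)) ^ 3 + 4 * ∑ i ∈ T, sg (x i)) * sg (x a) := by
      intro x
      rw [sum_insert ha]
      linear_combination W x * (6 * (∑ i ∈ T, sg (x i)) ^ 2 + 4 * (∑ i ∈ T, sg (x i)) * sg (x a) +
        sg (x a) ^ 2 + 1) * sg_sq (x a)
    simp only [hexp, sum_add_distrib, ← mul_sum, hodd, ih, h2, card_insert_of_notMem ha]
    push_cast
    ring

/-- The even moments of order two and four of a product of two disjoint Rademacher sums. -/
lemma sum_sq_and_sum_pow_four_of_disjoint {S T : Finset ι} (h : Disjoint S T) :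
    ∑ x : ι → Bool, ((∑ i ∈ S, sg (x i)) * ∑ i ∈ T, sg (x i)) ^ 2 =
        (#S : ℝ) * #T * 2 ^ Fintype.card ι ∧
      ∑ x : ι → Bool, ((∑ i ∈ S, sg (x i)) * ∑ i ∈ T, sg (x i)) ^ 4 =
        (3 * (#S : ℝ) ^ 2 - 2 * #S) * (3 * (#T : ℝ) ^ 2 - 2 * #T) * 2 ^ Fintype.card ι := by
  have hinv : ∀ i ∈ T, ∀ x : ι → Bool,
      ∑ j ∈ S, sg (flipOn {i} x j) = ∑ j ∈ S, sg (x j) := fun i hi x =>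
    sum_sg_flipOn_of_disjoint (disjoint_singleton_right.mpr (disjoint_right.mp h hi)) x
  have hone : ∑ _x : ι → Bool, (1 : ℝ) = 2 ^ Fintype.card ι := by simp
  have h2 := sum_mul_sum_sg_sq S (fun _ => 1) fun _ _ _ => rfl
  have h4 := sum_mul_sum_sg_pow_four S (fun _ => 1) fun _ _ _ => rfl
  simp only [one_mul, hone] at h2 h4
  simp only [mul_pow]
  rw [sum_mul_sum_sg_sq T _ fun i hi x => by rw [hinv i hi x],
    sum_mul_sum_sg_pow_four T _ fun i hi x => by rw [hinv i hi x], h2, h4]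
  constructor <;> ring

/-- If `q` ignores the coordinates in `T`, then flipping them shows that the `L¹` distance from `q`
to the square of the normalized sum dominates the cross term. -/
lemma two_mul_sum_abs_le {S T : Finset ι} (h : Disjoint S T) (hu : S ∪ T = univ) (c : ℝ)
    (q : (ι → Bool) → ℝ) (hq : ∀ x, q (flipOn T x) = q x) :
    2 * ∑ x : ι → Bool, |((∑ i ∈ S, sg (x i)) * ∑ i ∈ T, sg (x i)) / c ^ 2| ≤
      ∑ x, |q x - ((∑ i, sg (x i)) / c) ^ 2| := by
  have hflip := Equiv.sum_comp (flipOn T) (fun x => |q x - ((∑ i, sg (x i)) / c) ^ 2|)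
  simp only [hq, ← hu, sum_union h, sum_sg_flipOn_self, sum_sg_flipOn_of_disjoint h] at hflip ⊢
  have hpt : ∀ u v r : ℝ, 4 * |u * v / c ^ 2| ≤
      |r - ((u + -v) / c) ^ 2| + |r - ((u + v) / c) ^ 2| := by
    intro u v r
    have habs : 4 * |u * v / c ^ 2| = |(r - ((u + -v) / c) ^ 2) - (r - ((u + v) / c) ^ 2)| := by
      rw [← abs_of_pos (four_pos : (0 : ℝ) < 4), ← abs_mul]
      congr 1
      ring
    rw [habs]
    exact abs_sub _ _
  have hsum := sum_le_sum fun (x : ι → Bool) (_ : x ∈ univ) =>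
    hpt (∑ i ∈ S, sg (x i)) (∑ i ∈ T, sg (x i)) (q x)
  rw [sum_add_distrib, hflip, ← mul_sum] at hsum
  linarith

end Flip

lemma three_halves_sq_sub_half_pow_four_le_abs (t : ℝ) : 3 / 2 * t ^ 2 - t ^ 4 / 2 ≤ |t| := by
  have h0 := abs_nonneg t
  rw [← sq_abs t, ← (by decide : Even 4).pow_abs t]
  nlinarith [mul_nonneg (mul_nonneg h0 (sq_nonneg (|t| - 1))) (by linarith : 0 ≤ |t| + 2)]

theorem stmt12 :
    ∃ ε > (0 : ℝ), ∃ D' : ℝ, 0 < D' ∧ D' < 1 ∧ ∃ N₀ : ℕ, ∀ N ≥ N₀,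
      ∀ k : ℕ, ∀ hk : k ≤ N, (N : ℝ) - k ≥ D' * N →
        ∀ q : (Fin k → Bool) → ℝ,
          (1 / 2 ^ N) * ∑ x : Fin N → Bool,
              |q (fun i => x (Fin.castLE hk i)) - ((∑ i, sg (x i)) / N) ^ 2|
            > ε / N := by
  refine ⟨1 / 24, by norm_num, 1 / 2, by norm_num, by norm_num, 2, fun N hN k hk hkN q => ?_⟩
  have hkN' : 2 * k ≤ N := by
    have : (2 * k : ℝ) ≤ N := by linarith
    exact_mod_cast this
  set S : Finset (Fin N) := {i | i.val < (N + 1) / 2} with hS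
  have hdis : Disjoint S Sᶜ := disjoint_compl_right
  have hSc : #S = (N + 1) / 2 := by
    rw [hS, Fin.card_filter_val_lt]
    omega
  have hcard : #S + #Sᶜ = N := by simp
  have hab : N ^ 2 ≤ 4 * (#S * #Sᶜ) + 1 := by
    rcases Nat.even_or_odd' N with ⟨m, hm | hm⟩
    · have h1 : #S = m := by omega
      have h2 : #Sᶜ = m := by omega
      rw [h1, h2, hm]
      nlinarith
    · have h1 : #S = m + 1 := by omega
      have h2 : #Sᶜ = m := by omega
      rw [h1, h2, hm]
      nlinarith
  have hkey := two_mul_sum_abs_le hdis (union_compl S) (N : ℝ)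
    (fun x => q fun i => x (Fin.castLE hk i)) fun x => by
      congr 1
      funext i
      have hi : Fin.castLE hk i ∈ S := by
        simp only [hS, mem_filter, mem_univ, true_and, Fin.val_castLE]
        omega
      rw [flipOn_apply, if_neg (by simpa using hi)]
  obtain ⟨h2, h4⟩ := sum_sq_and_sum_pow_four_of_disjoint hdis
  rw [Fintype.card_fin] at h2 h4
  have hN2 : (2 : ℝ) ≤ N := by exact_mod_cast hN
  have hN0 : (0 : ℝ) < N := by linarith
  have hcardR : (#S : ℝ) + #Sᶜ = N := by exact_mod_cast hcard
  have habR : (N : ℝ) ^ 2 ≤ 4 * (#S * #Sᶜ) + 1 := by exact_mod_cast hab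
  have ha1 : (1 : ℝ) ≤ #S := by
    have : 1 ≤ #S := by omega
    exact_mod_cast this
  have hb1 : (1 : ℝ) ≤ #Sᶜ := by
    have : 1 ≤ #Sᶜ := by omega
    exact_mod_cast this
  generalize (#S : ℝ) = a at *
  generalize (#Sᶜ : ℝ) = b at *
  have hP : (0 : ℝ) < 2 ^ N := by positivity
  have hlow : ∑ x : Fin N → Bool, |((∑ i ∈ S, sg (x i)) * ∑ i ∈ Sᶜ, sg (x i)) / (N : ℝ) ^ 2| ≥
      1 / N * (3 / 2 * (a * b / N ^ 2) -
        (3 * a ^ 2 - 2 * a) * (3 * b ^ 2 - 2 * b) / N ^ 4 / 2) * 2 ^ N := by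
    have hpt : ∀ w : ℝ, 3 / (2 * (N : ℝ) ^ 3) * w ^ 2 - 1 / (2 * (N : ℝ) ^ 5) * w ^ 4 ≤
        |w / (N : ℝ) ^ 2| := by
      intro w
      have h := mul_le_mul_of_nonneg_left (three_halves_sq_sub_half_pow_four_le_abs (w / N))
        (by positivity : (0 : ℝ) ≤ 1 / N)
      have hw : |w / (N : ℝ) ^ 2| = 1 / N * |w / N| := by
        rw [abs_div, abs_div, abs_of_pos hN0, abs_of_pos (by positivity : (0 : ℝ) < (N : ℝ) ^ 2)]
        ring
      rw [hw]
      refine le_trans (le_of_eq ?_) h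
      ring
    refine le_trans (le_of_eq ?_) (sum_le_sum fun x _ => hpt _)
    rw [sum_sub_distrib, ← mul_sum, ← mul_sum, h2, h4]
    field_simp
  set p := a * b / (N : ℝ) ^ 2 with hp
  have hp1 : 1 / 9 ≤ p := by
    rw [hp, div_le_div_iff₀ (by norm_num) (by positivity)]
    nlinarith
  have hp2 : p ≤ 1 / 4 := by
    rw [hp, div_le_div_iff₀ (by positivity) (by norm_num), ← hcardR]
    nlinarith [sq_nonneg (a - b)]
  have hfour : (3 * a ^ 2 - 2 * a) * (3 * b ^ 2 - 2 * b) / N ^ 4 ≤ 9 * p ^ 2 := by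
    have hpp : 9 * p ^ 2 = (3 * a ^ 2) * (3 * b ^ 2) / N ^ 4 := by
      rw [hp]
      field_simp
      ring
    rw [hpp]
    gcongr ?_ / _
    exact mul_le_mul (by linarith) (by linarith) (by nlinarith) (by positivity)
  have hmain : 1 / 24 ≤ 3 / 2 * p -
      (3 * a ^ 2 - 2 * a) * (3 * b ^ 2 - 2 * b) / N ^ 4 / 2 := by
    nlinarith [mul_nonneg (sub_nonneg.mpr hp1) (sub_nonneg.mpr hp2)]
  have hscaled : 1 / N * (1 / 24) * (2 : ℝ) ^ N ≤ 1 / N * (3 / 2 * p -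
      (3 * a ^ 2 - 2 * a) * (3 * b ^ 2 - 2 * b) / N ^ 4 / 2) * 2 ^ N := by
    gcongr
  have hpos : 0 < 1 / N * (1 / 24) * (2 : ℝ) ^ N := by positivity
  rw [gt_iff_lt, one_div_mul_eq_div, lt_div_iff₀ hP]
  have heq : (1 / 24 : ℝ) / N * 2 ^ N = 1 / N * (1 / 24) * (2 : ℝ) ^ N := by ring
  linarith
end

section
/- There exists a constant C > 0 such that for all sufficiently large m and every real number q, one has E_z[ | q - (Σ_{j=1}^m z_j)² | ] ≥ C·m, where the expectation is over z drawn uniformly at random from {-1,1}^m. -/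
lemma sum_cube_succ (n : ℕ) (f : ℝ → ℝ) :
    ∑ z : Fin (n + 1) → Bool, f (∑ j, sg (z j)) =
      ∑ z : Fin n → Bool, (f (1 + ∑ j, sg (z j)) + f (-1 + ∑ j, sg (z j))) := by
  rw [← (Fin.consEquiv fun _ => Bool).sum_comp, Fintype.sum_prod_type]
  simp [Fin.consEquiv, Fin.sum_univ_succ, sg, Finset.sum_add_distrib]

lemma sum_cube_sq (n : ℕ) :
    ∑ z : Fin n → Bool, (∑ j, sg (z j)) ^ 2 = n * 2 ^ n := by
  induction n with
  | zero => simp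
  | succ n ih =>
    rw [sum_cube_succ n (· ^ 2)]
    calc _ = ∑ z : Fin n → Bool, (2 * (∑ j, sg (z j)) ^ 2 + 2) :=
          Finset.sum_congr rfl fun z _ => by ring
      _ = _ := by
          rw [Finset.sum_add_distrib, ← Finset.mul_sum, ih]
          simp
          ring

lemma sum_cube_pow_four (n : ℕ) :
    ∑ z : Fin n → Bool, (∑ j, sg (z j)) ^ 4 = (3 * n ^ 2 - 2 * n) * 2 ^ n := by
  induction n with
  | zero => simp
  | succ n ih =>
    rw [sum_cube_succ n (· ^ 4)]
    calc _ = ∑ z : Fin n → Bool, (2 * (∑ j, sg (z j)) ^ 4 + 12 * (∑ j, sg (z j)) ^ 2 + 2) :=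
          Finset.sum_congr rfl fun z _ => by ring
      _ = _ := by
          rw [Finset.sum_add_distrib, Finset.sum_add_distrib, ← Finset.mul_sum, ← Finset.mul_sum,
            ih, sum_cube_sq]
          simp
          ring

lemma three_mul_sq_sub_pow_four_le (x t : ℝ) (ht : 0 ≤ t) :
    3 * t ^ 2 * x ^ 2 - x ^ 4 ≤ 2 * t ^ 3 * |x| := by
  have h : 0 ≤ |x| * ((|x| - t) ^ 2 * (|x| + 2 * t)) := by positivity
  have h2 : x ^ 2 = |x| ^ 2 := (sq_abs x).symm
  have h4 : x ^ 4 = |x| ^ 4 := by rw [show x ^ 4 = (x ^ 2) ^ 2 by ring, h2]; ring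
  rw [h2, h4]
  linarith

/-- A Khintchine inequality: the first absolute moment of a Rademacher sum is at least
`√(n / 3)`. -/
lemma sqrt_le_sum_cube_abs (n : ℕ) :
    2 ^ n * √(n / 3) ≤ ∑ z : Fin n → Bool, |∑ j, sg (z j)| := by
  rcases Nat.eq_zero_or_pos n with rfl | hn
  · simp
  have hn' : (0 : ℝ) < n := by exact_mod_cast hn
  set s := √((n : ℝ) / 3) with hs
  have hs0 : 0 < s := Real.sqrt_pos.2 (by positivity)
  have hs2 : (n : ℝ) = 3 * s ^ 2 := by rw [hs, Real.sq_sqrt (by positivity)]; ring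
  have h := Finset.sum_le_sum fun (z : Fin n → Bool) (_ : z ∈ Finset.univ) =>
    three_mul_sq_sub_pow_four_le (∑ j, sg (z j)) (3 * s) (by positivity)
  rw [Finset.sum_sub_distrib, ← Finset.mul_sum, ← Finset.mul_sum, sum_cube_sq,
    sum_cube_pow_four, hs2] at h
  have hp : (0 : ℝ) < 2 ^ n := by positivity
  have h3 : 0 < 54 * s ^ 3 := by positivity
  refine le_of_mul_le_mul_left ?_ h3
  nlinarith [mul_pos hp (pow_pos hs0 2)]

lemma sum_cube_neg (n : ℕ) (f : ℝ → ℝ) :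
    ∑ z : Fin n → Bool, f (-∑ j, sg (z j)) = ∑ z : Fin n → Bool, f (∑ j, sg (z j)) := by
  rw [← (Equiv.piCongrRight fun _ : Fin n => Equiv.boolNot).sum_comp]
  refine Finset.sum_congr rfl fun z _ => ?_
  rw [← Finset.sum_neg_distrib]
  refine congrArg f (Finset.sum_congr rfl fun j _ => ?_)
  cases h : z j <;> simp [sg, h]

lemma sum_cube_add (a b : ℕ) (f : ℝ → ℝ) :
    ∑ z : Fin (a + b) → Bool, f (∑ j, sg (z j)) =
      ∑ x : Fin a → Bool, ∑ y : Fin b → Bool, f (∑ j, sg (x j) + ∑ j, sg (y j)) := by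
  rw [← (Fin.appendEquiv a b).sum_comp, Fintype.sum_prod_type]
  simp [Fin.appendEquiv, Fin.sum_univ_add]

/-- Reflecting the last `b` signs changes the squared sum by `4 * A * B`, where `A` and `B` are
the partial sums, so no `q` can be close to both values. -/
lemma two_mul_sum_abs_mul_sum_abs_le (a b : ℕ) (q : ℝ) :
    2 * ((∑ x : Fin a → Bool, |∑ j, sg (x j)|) * ∑ y : Fin b → Bool, |∑ j, sg (y j)|) ≤
      ∑ z : Fin (a + b) → Bool, |q - (∑ j, sg (z j)) ^ 2| := by
  rw [sum_cube_add a b fun s => |q - s ^ 2|, Finset.sum_mul, Finset.mul_sum]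
  refine Finset.sum_le_sum fun x _ => ?_
  set A := ∑ j, sg (x j)
  have hneg := sum_cube_neg b fun s => |q - (A + s) ^ 2|
  have h : ∑ y : Fin b → Bool, 4 * (|A| * |∑ j, sg (y j)|) ≤
      ∑ y : Fin b → Bool, (|q - (A + -∑ j, sg (y j)) ^ 2| + |q - (A + ∑ j, sg (y j)) ^ 2|) := by
    refine Finset.sum_le_sum fun y _ => ?_
    set B := ∑ j, sg (y j)
    calc 4 * (|A| * |B|) = |(q - (A + -B) ^ 2) - (q - (A + B) ^ 2)| := by
          rw [show (q - (A + -B) ^ 2) - (q - (A + B) ^ 2) = 4 * (A * B) by ring, abs_mul, abs_mul]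
          norm_num
      _ ≤ _ := abs_sub _ _
  rw [Finset.sum_add_distrib, hneg, ← Finset.mul_sum, ← Finset.mul_sum] at h
  linarith

theorem stmt13 :
    ∃ C > (0 : ℝ), ∃ m₀ : ℕ, ∀ m ≥ m₀, ∀ q : ℝ,
      (1 / 2 ^ m) * ∑ z : Fin m → Bool, |q - (∑ j, sg (z j)) ^ 2| ≥ C * m := by
  refine ⟨2 / 9, by norm_num, 2, fun m hm q => ?_⟩
  obtain ⟨a, b, rfl, ha, hb⟩ : ∃ a b, m = a + b ∧ m ≤ 3 * a ∧ m ≤ 3 * b :=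
    ⟨m / 2, m - m / 2, by omega, by omega, by omega⟩
  have h := two_mul_sum_abs_mul_sum_abs_le a b q
  have hmul := mul_le_mul (sqrt_le_sum_cube_abs a) (sqrt_le_sum_cube_abs b) (by positivity)
    (by positivity)
  have hsqrt : ((a + b : ℕ) : ℝ) / 9 ≤ √(a / 3) * √(b / 3) := by
    rw [← Real.sqrt_mul (by positivity)]
    apply Real.le_sqrt_of_sq_le
    have ha' : ((a + b : ℕ) : ℝ) ≤ 3 * a := by exact_mod_cast ha
    have hb' : ((a + b : ℕ) : ℝ) ≤ 3 * b := by exact_mod_cast hb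
    have := mul_le_mul ha' hb' (by positivity) (by positivity)
    linarith
  have hp : (0 : ℝ) < 2 ^ (a + b) := by positivity
  rw [ge_iff_le, one_div, le_inv_mul_iff₀ hp]
  calc 2 ^ (a + b) * (2 / 9 * ((a + b : ℕ) : ℝ))
      = 2 * (2 ^ (a + b) * (((a + b : ℕ) : ℝ) / 9)) := by ring
    _ ≤ 2 * (2 ^ (a + b) * (√(a / 3) * √(b / 3))) := by gcongr
    _ = 2 * (2 ^ a * √(a / 3) * (2 ^ b * √(b / 3))) := by rw [pow_add]; ring
    _ ≤ _ := by linarith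
end
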